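/- arXiv:2212.13188 — 3 statements merged into one kernel-verified Lean document; each statement's English description precedes it below -/
import Mathlib

section
/- The set S of clearing vectors equals the union over all binary vectors b ∈ {0,1}^N of the fixpoint sets of F_b; that is, S = ⋃_{b ∈ {0,1}^N} {p ∈ [0,l] : p = F_b(p)}. -/
open Matrix

/-!
A clearing pair `(p, V)` satisfies `V = G₊(p, V)`, so uniqueness of that solution forces `V = H p`,
and what remains is a condition on each coordinate separately. A fully paying coordinate,
`pⁱ = lⁱ ≤ xⁱ`, is fixed by `Φ₁`; a defaulting one, `pⁱ = yⁱ ≤ lⁱ`, is fixed by `Φ₀`. Both values of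
`bⁱ` can be forced: if `yⁱ < lⁱ ≤ xⁱ`, then `Φ₀` selects default and `Φ₁` full payment. Conversely,
since `y ≤ x`, a payment prescribed by either map never exceeds `xⁱ`.
-/

section NetworkAssets

variable {ι K : Type*} [Fintype ι] [Semiring K]

/-- The assets `x(p, V) = e + Π'p + Θ'V` held when the payments are `p` and the equities are `V`. -/
def totalAssets (e : ι → K) (P Th : Matrix ι ι K) (p V : ι → K) : ι → K :=
  e + Pᵀ *ᵥ p + Thᵀ *ᵥ V

/-- The assets `y(p, V) = αe + βΠ'p + γΘ'V` recovered in default, where `α`, `β`, `γ` are the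
recovery rates of the three asset classes. -/
def recoveredAssets (α β γ : K) (e : ι → K) (P Th : Matrix ι ι K) (p V : ι → K) : ι → K :=
  α • e + β • (Pᵀ *ᵥ p) + γ • (Thᵀ *ᵥ V)

variable [PartialOrder K] [IsOrderedRing K]

theorem transpose_mulVec_nonneg {M : Matrix ι ι K} {v : ι → K} (hM : ∀ i j, 0 ≤ M i j)
    (hv : 0 ≤ v) : 0 ≤ Mᵀ *ᵥ v :=
  fun i => dotProduct_nonneg_of_nonneg (fun j => hM j i) hv

theorem recoveredAssets_le_totalAssets {α β γ : K} {e : ι → K} {P Th : Matrix ι ι K} {p V : ι → K}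
    (hα : α ≤ 1) (hβ : β ≤ 1) (hγ : γ ≤ 1) (he : 0 ≤ e) (hP : ∀ i j, 0 ≤ P i j)
    (hTh : ∀ i j, 0 ≤ Th i j) (hp : 0 ≤ p) (hV : 0 ≤ V) :
    recoveredAssets α β γ e P Th p V ≤ totalAssets e P Th p V := fun i =>
  add_le_add
    (add_le_add (mul_le_of_le_one_left (he i) hα)
      (mul_le_of_le_one_left (transpose_mulVec_nonneg hP hp i) hβ))
    (mul_le_of_le_one_left (transpose_mulVec_nonneg hTh hV i) hγ)

end NetworkAssets

section SingleInstitution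

variable {K : Type*} [Ring K] [LinearOrder K]

/-- One coordinate of `Φ_b`: with assets `x`, recovered assets `y` and liabilities `l`, it is
`Φ₀ = y ∧ l` for `b = false` and `Φ₁ = y d + l (1 - d)`, `d = 1_{x < l}`, for `b = true`. -/
def paymentRule (b : Bool) (x y l : K) : K :=
  let d : K := if x < l then 1 else 0
  if b then y * d + l * (1 - d) else min y l

/-- One coordinate `(x - l)⁺ 1_{p = l}` of `G₊`: the equity of an institution with assets `x` and
liabilities `l` that pays `p`. -/
def equityRule (x l p : K) : K :=
  (x - l)⁺ * if p = l then 1 else 0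

theorem paymentRule_false (x y l : K) : paymentRule false x y l = min y l := rfl

theorem paymentRule_true (x y l : K) : paymentRule true x y l = if x < l then y else l := by
  by_cases h : x < l <;> simp [paymentRule, h]

theorem paymentRule_le {x y : K} (b : Bool) (l : K) (hyx : y ≤ x) : paymentRule b x y l ≤ x := by
  cases b with
  | false => exact (min_le_left y l).trans hyx
  | true =>
    rw [paymentRule_true]
    split_ifs with hxl
    · exact hyx
    · exact not_lt.1 hxl

theorem paymentRule_eq_or (b : Bool) (x y l : K) :
    paymentRule b x y l = l ∨ paymentRule b x y l = y := by
  cases b with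
  | false => exact (min_choice y l).symm
  | true =>
    rw [paymentRule_true]
    split_ifs
    · exact Or.inr rfl
    · exact Or.inl rfl

theorem exists_eq_paymentRule_iff {p x y l : K} (hpl : p ≤ l) (hyx : y ≤ x) :
    (∃ b, p = paymentRule b x y l) ↔ p ≤ x ∧ (p = l ∨ p = y) := by
  constructor
  · rintro ⟨b, rfl⟩
    exact ⟨paymentRule_le b l hyx, paymentRule_eq_or b x y l⟩
  · rintro ⟨hpx, rfl | rfl⟩
    · exact ⟨true, by rw [paymentRule_true, if_neg hpx.not_gt]⟩
    · exact ⟨false, by rw [paymentRule_false, min_eq_left hpl]⟩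

theorem equityRule_nonneg [IsOrderedRing K] (x l p : K) : 0 ≤ equityRule x l p :=
  mul_nonneg (posPart_nonneg _) (by split_ifs <;> simp)

theorem eq_equityRule_iff [IsOrderedRing K] {p x l V : K} (hpx : p ≤ x) :
    V = equityRule x l p ↔ (p = l → V = x - p) ∧ (p ≠ l → V = 0) := by
  by_cases hpl : p = l
  · subst hpl
    simp [equityRule, posPart_of_nonneg (sub_nonneg.2 hpx)]
  · simp [equityRule, hpl]

end SingleInstitution

section ClearingVectors

variable {ι K : Type*} [Ring K] [LinearOrder K]

/-- `(p, V)` is a clearing pair for the liabilities `l`, where `x p V` are the assets held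
and `y p V` those recovered in default. The last three conjuncts are limited liability,
absolute priority and equity evaluation. The maps `x` and `y` are arbitrary, not necessarily
affine as in a network. -/
def IsClearingPair (x y : (ι → K) → (ι → K) → ι → K) (l p V : ι → K) : Prop :=
  p ∈ Set.Icc 0 l ∧ 0 ≤ V ∧
    (∀ i, p i ≤ x p V i) ∧
    (∀ i, p i = l i ∨ p i = y p V i) ∧
    (∀ i, (p i = l i → V i = x p V i - p i) ∧ (p i ≠ l i → V i = 0))

/-- The map `Φ_b`, whose fixed points in `p` are the candidate payment vectors given `V`. -/
def paymentMap (x y : (ι → K) → (ι → K) → ι → K) (l : ι → K) (b : ι → Bool) (p V : ι → K) :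
    ι → K :=
  fun i => paymentRule (b i) (x p V i) (y p V i) (l i)

/-- The map `G₊`, whose fixed points in `V` are the equities consistent with the payments `p`. -/
def equityMap (x : (ι → K) → (ι → K) → ι → K) (l p V : ι → K) : ι → K :=
  fun i => equityRule (x p V i) (l i) (p i)

theorem exists_eq_paymentMap_iff {x y : (ι → K) → (ι → K) → ι → K} {l p V : ι → K} (hpl : p ≤ l)
    (hyx : y p V ≤ x p V) :
    (∃ b, p = paymentMap x y l b p V) ↔
      (∀ i, p i ≤ x p V i) ∧ ∀ i, p i = l i ∨ p i = y p V i := by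
  simp only [← forall_and, ← exists_eq_paymentRule_iff (hpl _) (hyx _), Classical.skolem,
    funext_iff, paymentMap]

variable [IsOrderedRing K]

theorem nonneg_of_eq_equityMap {x : (ι → K) → (ι → K) → ι → K} {l p V : ι → K}
    (hV : V = equityMap x l p V) : 0 ≤ V := by
  rw [hV]
  exact fun i => equityRule_nonneg _ _ _

theorem eq_equityMap_iff {x : (ι → K) → (ι → K) → ι → K} {l p V : ι → K}
    (hpx : ∀ i, p i ≤ x p V i) :
    V = equityMap x l p V ↔ ∀ i, (p i = l i → V i = x p V i - p i) ∧ (p i ≠ l i → V i = 0) :=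
  funext_iff.trans (forall_congr' fun i => eq_equityRule_iff (hpx i))

theorem isClearingPair_iff {x y : (ι → K) → (ι → K) → ι → K} {l p V : ι → K}
    (hyx : ∀ p ∈ Set.Icc 0 l, ∀ V, 0 ≤ V → y p V ≤ x p V) :
    IsClearingPair x y l p V ↔
      p ∈ Set.Icc 0 l ∧ V = equityMap x l p V ∧ ∃ b, p = paymentMap x y l b p V := by
  constructor
  · rintro ⟨hp, hV, hliability, hpriority, hequity⟩
    exact ⟨hp, (eq_equityMap_iff hliability).2 hequity,
      (exists_eq_paymentMap_iff hp.2 (hyx p hp V hV)).2 ⟨hliability, hpriority⟩⟩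
  · rintro ⟨hp, hequity, hpayment⟩
    have hV : 0 ≤ V := nonneg_of_eq_equityMap hequity
    obtain ⟨hliability, hpriority⟩ := (exists_eq_paymentMap_iff hp.2 (hyx p hp V hV)).1 hpayment
    exact ⟨hp, hV, hliability, hpriority, (eq_equityMap_iff hliability).1 hequity⟩

theorem stmt7_general {x y : (ι → K) → (ι → K) → ι → K} {l : ι → K}
    (hyx : ∀ p ∈ Set.Icc 0 l, ∀ V, 0 ≤ V → y p V ≤ x p V) {H : (ι → K) → ι → K}
    (hH : ∀ u ∈ Set.Icc 0 l,
      H u = equityMap x l u (H u) ∧ ∀ W, W = equityMap x l u W → W = H u) :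
    {p | ∃ V, IsClearingPair x y l p V} =
      ⋃ b : ι → Bool, {p | p ∈ Set.Icc 0 l ∧ p = paymentMap x y l b p (H p)} := by
  ext p
  simp only [Set.mem_ofPred_eq, Set.mem_iUnion, isClearingPair_iff hyx]
  constructor
  · rintro ⟨V, hp, hV, b, hb⟩
    obtain rfl : V = H p := (hH p hp).2 V hV
    exact ⟨b, hp, hb⟩
  · rintro ⟨b, hp, hb⟩
    exact ⟨H p, hp, (hH p hp).1, b, hb⟩

end ClearingVectors

/-- The set `S` of clearing vectors equals the union over all binary
vectors `b ∈ {0,1}^N` of the fixpoint sets of `F_b`: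
`S = ⋃_{b ∈ {0,1}^N} {p ∈ [0,l] : p = F_b(p)}`. -/
theorem stmt7 (N : ℕ) (hN : 1 < N)
    (e l : Fin N → ℝ) (he : 0 ≤ e) (hl : 0 ≤ l)
    (P Th : Matrix (Fin N) (Fin N) ℝ)
    (hP : ∀ i j, 0 ≤ P i j) (hProw : ∀ i, ∑ j, P i j = 1)
    (hTh : ∀ i j, 0 ≤ Th i j) (hThrow : ∀ i, ∑ j, Th i j ≤ 1)
    (α β γ : ℝ) (hα : α ∈ Set.Icc (0:ℝ) 1) (hβ : β ∈ Set.Icc (0:ℝ) 1)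
    (hγ : γ ∈ Set.Icc (0:ℝ) 1)
    (Clearing : (Fin N → ℝ) → (Fin N → ℝ) → Prop)
    (hClearing : ∀ p V : Fin N → ℝ, Clearing p V ↔
      (p ∈ Set.Icc (0 : Fin N → ℝ) l ∧ 0 ≤ V ∧
      (∀ i, p i ≤ e i + P.transpose.mulVec p i + Th.transpose.mulVec V i) ∧
      (∀ i, p i = l i ∨
        p i = α * e i + β * P.transpose.mulVec p i + γ * Th.transpose.mulVec V i) ∧
      (∀ i, (p i = l i →
          V i = e i + P.transpose.mulVec p i + Th.transpose.mulVec V i - p i) ∧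
        (p i ≠ l i → V i = 0))))
    (Gp : (Fin N → ℝ) → (Fin N → ℝ) → Fin N → ℝ)
    (hGp : Gp = fun u V i =>
      max (e i + P.transpose.mulVec u i + Th.transpose.mulVec V i - l i) 0 *
        (if u i = l i then (1 : ℝ) else 0))
    (H : (Fin N → ℝ) → Fin N → ℝ)
    (hH : ∀ u ∈ Set.Icc (0 : Fin N → ℝ) l,
      H u = Gp u (H u) ∧ ∀ W : Fin N → ℝ, W = Gp u W → W = H u)
    (F : (Fin N → Bool) → (Fin N → ℝ) → Fin N → ℝ)
    (hF : F = fun b p i =>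
      let V := H p
      let xi := e i + P.transpose.mulVec p i + Th.transpose.mulVec V i
      let yi := α * e i + β * P.transpose.mulVec p i + γ * Th.transpose.mulVec V i
      let di : ℝ := if xi < l i then 1 else 0
      if b i then yi * di + l i * (1 - di) else min yi (l i)) :
    {p : Fin N → ℝ | ∃ V : Fin N → ℝ, Clearing p V} =
      ⋃ b : Fin N → Bool,
        {p : Fin N → ℝ | p ∈ Set.Icc (0 : Fin N → ℝ) l ∧ p = F b p} := by
  subst hGp hF
  simp only [hClearing]
  exact stmt7_general (x := totalAssets e P Th) (y := recoveredAssets α β γ e P Th)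
    (fun _ hp _ => recoveredAssets_le_totalAssets hα.2 hβ.2 hγ.2 he hP hTh hp.1) hH
end

section
/- If (ǎ,p̌,V̌) is optimal for problem P2 (admissible, with f(ǎ,p̌,V̌) ≤ f(a,p,V) for every admissible (a,p,V)), then p̌ = (1−ǎ)∘y(p̌,V̌) + ǎ∘l; that is, for each j, p̌ʲ = yʲ(p̌,V̌) if ǎʲ = 0 and p̌ʲ = lʲ if ǎʲ = 1. -/
open Matrix

/-!
Let `q` be the vector that equals `l` where `a = 1` and `y(p, V)` where `a = 0`; the constraints of
P2 give `q ≤ p`. Since `x(·, V)` and `y(·, V)` are monotone, replacing `p` by `q` preserves every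
upper bound on them, and the lower bounds on the payments persist because `y(q, V) ≤ y(p, V)`. So
`(a, q, V)` is admissible, and an objective strictly increasing in `p` forces `p = q` at an optimum.
-/

section Monotonicity

variable {m ι R : Type*} [Fintype ι] [Semiring R] [PartialOrder R]

theorem strictMono_sum_apply {M N : Type*} [PartialOrder M] [AddCommMonoid N] [PartialOrder N]
    [IsOrderedCancelAddMonoid N] {g : ι → M → N} (hg : ∀ i, StrictMono (g i)) :
    StrictMono fun p : ι → M => ∑ i, g i (p i) := fun _ _ hpq =>
  have ⟨hle, i, hi⟩ := Pi.lt_def.1 hpq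
  Finset.sum_lt_sum (fun j _ => (hg j).monotone (hle j)) ⟨i, Finset.mem_univ i, hg i hi⟩

theorem strictMono_sum_add_mul_add [IsStrictOrderedRing R] {b c d : ι → R} (hc : ∀ i, 0 < c i) :
    StrictMono fun p : ι → R => ∑ i, (b i + c i * p i + d i) :=
  strictMono_sum_apply (g := fun i t => b i + c i * t + d i) fun i _ _ hst =>
    add_lt_add_left (add_lt_add_right (mul_lt_mul_of_pos_left hst (hc i)) _) _

variable [IsOrderedRing R]

theorem monotone_mulVec {M : Matrix m ι R} (hM : ∀ i j, 0 ≤ M i j) : Monotone (M *ᵥ ·) :=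
  fun _ _ hpq i => dotProduct_le_dotProduct_of_nonneg_left hpq (hM i)

theorem mulVec_nonneg {M : Matrix m ι R} (hM : ∀ i j, 0 ≤ M i j) {p : ι → R} (hp : 0 ≤ p) :
    0 ≤ M *ᵥ p :=
  fun i => dotProduct_nonneg_of_nonneg (hM i) hp

end Monotonicity

section Values

variable {ι R : Type*} [Fintype ι] [Semiring R]

/-- The asset value `x(p, V) = e + Π'p + Θ'V` of each institution, from its external assets `e`, the
payments `p` it receives through `Π` and its holdings `Θ` of the equities `V`. -/
def assetValue (e : ι → R) (P Th : Matrix ι ι R) (p V : ι → R) : ι → R :=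
  fun i => e i + (Pᵀ *ᵥ p) i + (Thᵀ *ᵥ V) i

/-- The recovery value `y(p, V) = αe + βΠ'p + γΘ'V` that remains of the assets of each institution
if it defaults. -/
def recoveryValue (e : ι → R) (P Th : Matrix ι ι R) (α β γ : R) (p V : ι → R) : ι → R :=
  fun i => α * e i + β * (Pᵀ *ᵥ p) i + γ * (Thᵀ *ᵥ V) i

variable [PartialOrder R] [IsOrderedRing R] {e V : ι → R} {P Th : Matrix ι ι R} {α β γ : R}

theorem monotone_assetValue (hP : ∀ i j, 0 ≤ P i j) : Monotone (assetValue e P Th · V) :=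
  fun _ _ hpq i =>
    add_le_add (add_le_add le_rfl (monotone_mulVec (fun j k => hP k j) hpq i)) le_rfl

theorem monotone_recoveryValue (hP : ∀ i j, 0 ≤ P i j) (hβ : 0 ≤ β) :
    Monotone (recoveryValue e P Th α β γ · V) := fun _ _ hpq i =>
  add_le_add (add_le_add le_rfl
    (mul_le_mul_of_nonneg_left (monotone_mulVec (fun j k => hP k j) hpq i) hβ)) le_rfl

theorem recoveryValue_zero_nonneg (he : 0 ≤ e) (hTh : ∀ i j, 0 ≤ Th i j) (hα : 0 ≤ α)
    (hγ : 0 ≤ γ) (hV : 0 ≤ V) : 0 ≤ recoveryValue e P Th α β γ 0 V := fun i => by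
  have hThV : 0 ≤ (Thᵀ *ᵥ V) i := mulVec_nonneg (fun j k => hTh k j) hV i
  simpa only [recoveryValue, mulVec_zero, Pi.zero_apply, mul_zero, add_zero] using
    add_nonneg (mul_nonneg hα (he i)) (mul_nonneg hγ hThV)

end Values

section Settlement

variable {ι R : Type*} [Ring R]

/-- The payments `(1 - a) ∘ v + a ∘ l`: for a solvency indicator `a`, the solvent institutions pay
their liabilities `l` and the others pay `v`. -/
def settlement (a v l : ι → R) : ι → R :=
  fun i => (1 - a i) * v i + a i * l i

variable {a v l : ι → R} {i : ι}

theorem settlement_of_eq_zero (hi : a i = 0) : settlement a v l i = v i := by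
  simp [settlement, hi]

theorem settlement_of_eq_one (hi : a i = 1) : settlement a v l i = l i := by
  simp [settlement, hi]

variable [PartialOrder R]

/-- Admissibility for problem P2, with solvency indicator `a`, payments `p` and equities `V`. The
valuations `x` and `y` and the big-M constants `κ` and `κ₁` are parameters. -/
structure IsAdmissible (l : ι → R) (x y : (ι → R) → (ι → R) → ι → R) (κ κ₁ : R)
    (a p V : ι → R) : Prop where
  binary : ∀ i, a i = 0 ∨ a i = 1
  mem_Icc : p ∈ Set.Icc 0 l
  nonneg : 0 ≤ V
  sub_le : ∀ i, y p V i - κ₁ * a i ≤ p i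
  mul_le : ∀ i, a i * l i ≤ p i
  le_add : ∀ i, y p V i ≤ (1 - a i) * l i + κ₁ * a i
  sub_sub_le : ∀ i, x p V i - l i - κ * (1 - a i) ≤ V i

namespace IsAdmissible

variable {x y : (ι → R) → (ι → R) → ι → R} {κ κ₁ : R} {p V : ι → R}

theorem settlement_le (h : IsAdmissible l x y κ κ₁ a p V) : settlement a (y p V) l ≤ p := by
  intro i
  rcases h.binary i with hi | hi
  · simpa [settlement_of_eq_zero hi, hi] using h.sub_le i
  · simpa [settlement_of_eq_one hi, hi] using h.mul_le i

theorem settlement_nonneg (h : IsAdmissible l x y κ κ₁ a p V) (hy : Monotone (y · V))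
    (hy₀ : 0 ≤ y 0 V) : 0 ≤ settlement a (y p V) l := by
  intro i
  rcases h.binary i with hi | hi
  · rw [settlement_of_eq_zero hi]
    exact (hy₀.trans (hy h.mem_Icc.1)) i
  · rw [settlement_of_eq_one hi]
    exact (h.mem_Icc.1.trans h.mem_Icc.2) i

theorem isAdmissible_settlement [IsOrderedAddMonoid R] (h : IsAdmissible l x y κ κ₁ a p V)
    (hx : Monotone (x · V)) (hy : Monotone (y · V)) (hy₀ : 0 ≤ y 0 V) :
    IsAdmissible l x y κ κ₁ a (settlement a (y p V) l) V where
  binary := h.binary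
  mem_Icc := ⟨h.settlement_nonneg hy hy₀, h.settlement_le.trans h.mem_Icc.2⟩
  nonneg := h.nonneg
  sub_le i := by
    have hyq : y (settlement a (y p V) l) V i - κ₁ * a i ≤ y p V i - κ₁ * a i :=
      sub_le_sub_right (hy h.settlement_le i) _
    refine hyq.trans ?_
    rcases h.binary i with hi | hi
    · simp [settlement_of_eq_zero hi, hi]
    · rw [settlement_of_eq_one hi]
      exact (h.sub_le i).trans (h.mem_Icc.2 i)
  mul_le i := by
    rcases h.binary i with hi | hi
    · rw [hi, zero_mul]
      exact h.settlement_nonneg hy hy₀ i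
    · rw [settlement_of_eq_one hi, hi, one_mul]
  le_add i := (hy h.settlement_le i).trans (h.le_add i)
  sub_sub_le i :=
    (sub_le_sub_right (sub_le_sub_right (hx h.settlement_le i) _) _).trans (h.sub_sub_le i)

end IsAdmissible

theorem stmt12_general [IsOrderedAddMonoid R] {S : Type*} [Preorder S]
    {x y : (ι → R) → (ι → R) → ι → R} {κ κ₁ : R} {p V : ι → R} {g : (ι → R) → S}
    (hx : Monotone (x · V)) (hy : Monotone (y · V)) (hy₀ : 0 ≤ y 0 V) (hg : StrictMono g)
    (h : IsAdmissible l x y κ κ₁ a p V)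
    (hmin : IsMinOn g {q | IsAdmissible l x y κ κ₁ a q V} p) :
    p = settlement a (y p V) l :=
  (h.settlement_le.eq_of_not_lt fun hlt =>
    (hg hlt).not_ge (hmin (h.isAdmissible_settlement hx hy hy₀))).symm

end Settlement

/-- If `(ǎ,p̌,V̌)` is optimal for problem P2, then
`p̌ = (1−ǎ)∘y(p̌,V̌) + ǎ∘l`. -/
theorem stmt12 (N : ℕ) (hN : 1 < N)
    (e l : Fin N → ℝ) (he : 0 ≤ e) (hl : 0 ≤ l)
    (P Th : Matrix (Fin N) (Fin N) ℝ)
    (hP : ∀ i j, 0 ≤ P i j) (hProw : ∀ i, ∑ j, P i j = 1)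
    (hTh : ∀ i j, 0 ≤ Th i j) (hThrow : ∀ i, ∑ j, Th i j ≤ 1)
    (α β γ : ℝ) (hα : α ∈ Set.Icc (0:ℝ) 1) (hβ : β ∈ Set.Icc (0:ℝ) 1)
    (hγ : γ ∈ Set.Icc (0:ℝ) 1)
    (hInv : IsUnit (1 - Th.transpose))
    (hInvNonneg : ∀ i j, 0 ≤ (1 - Th.transpose)⁻¹ i j)
    (K : Fin N → ℝ)
    (hK : K = (1 - Th.transpose)⁻¹.mulVec
      (fun i => max (e i + P.transpose.mulVec l i - l i) 0))
    (κ : ℝ) (hκ : κ = ⨆ i, K i)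
    (κ₁ : ℝ) (hκ₁ : κ₁ = ⨆ i,
      (e i + P.transpose.mulVec l i + κ * Th.transpose.mulVec (fun _ => (1:ℝ)) i))
    (f₁ f₂ f₃ : Fin N → ℝ)
    (hf₁ : ∀ i, 0 < f₁ i) (hf₂ : ∀ i, 0 < f₂ i) (hf₃ : ∀ i, 0 < f₃ i)
    (f : (Fin N → ℝ) → (Fin N → ℝ) → (Fin N → ℝ) → ℝ)
    (hf : f = fun a p V => ∑ i, (f₁ i * a i + f₂ i * p i + f₃ i * V i))
    (Adm2 : (Fin N → ℝ) → (Fin N → ℝ) → (Fin N → ℝ) → Prop)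
    (hAdm2 : ∀ a p V : Fin N → ℝ, Adm2 a p V ↔
      ((∀ i, a i = 0 ∨ a i = 1) ∧ p ∈ Set.Icc (0 : Fin N → ℝ) l ∧ 0 ≤ V ∧
      (∀ i, α * e i + β * P.transpose.mulVec p i + γ * Th.transpose.mulVec V i
        - κ₁ * a i ≤ p i) ∧
      (∀ i, a i * l i ≤ p i) ∧
      (∀ i, α * e i + β * P.transpose.mulVec p i + γ * Th.transpose.mulVec V i
        ≤ (1 - a i) * l i + κ₁ * a i) ∧
      (∀ i, e i + P.transpose.mulVec p i + Th.transpose.mulVec V i - l i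
        - κ * (1 - a i) ≤ V i)))
    (acheck pcheck Vcheck : Fin N → ℝ)
    (hAdm : Adm2 acheck pcheck Vcheck)
    (hOpt : ∀ a p V : Fin N → ℝ, Adm2 a p V → f acheck pcheck Vcheck ≤ f a p V) :
    pcheck = fun j =>
      (1 - acheck j) * (α * e j + β * P.transpose.mulVec pcheck j
        + γ * Th.transpose.mulVec Vcheck j) + acheck j * l j := by
  subst hf
  obtain ⟨hbin, hp, hV, hsub, hmul, hadd, hsubsub⟩ := (hAdm2 _ _ _).1 hAdm
  exact stmt12_general (x := assetValue e P Th) (y := recoveryValue e P Th α β γ)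
    (monotone_assetValue hP) (monotone_recoveryValue hP hβ.1)
    (recoveryValue_zero_nonneg he hTh hα.1 hγ.1 hV) (strictMono_sum_add_mul_add hf₂)
    ⟨hbin, hp, hV, hsub, hmul, hadd, hsubsub⟩ fun q hq =>
      hOpt _ q _ ((hAdm2 _ _ _).2 ⟨hq.binary, hq.mem_Icc, hq.nonneg, hq.sub_le, hq.mul_le,
        hq.le_add, hq.sub_sub_le⟩)
end

section
/- If (ǎ,p̌,V̌) is optimal for problem P2, then V̌ = ǎ ∘ (x(p̌,V̌) − l)⁺; that is, for each j, V̌ʲ = (xʲ(p̌,V̌) − lʲ)⁺ if ǎʲ = 1 and V̌ʲ = 0 if ǎʲ = 0. -/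
open Matrix

/-!
At an optimum `V` is minimal among the vectors admissible with the given `a` and `p`. Lowering an
admissible `V` to `(x(p,V) − l − κ(1 − a))⁺` keeps it admissible: this vector is at most `V`, and
both `x` and `y` are nondecreasing in `V`. Hence an optimal `V` equals it, which is the claim where
`a = 1`. As `p ≤ l`, it also gives `V ≤ (e + Π'l − l)⁺ + Θ'V`, so `V ≤ K` because `(I − Θ')⁻¹ ≥ 0`.
Then `x(p,V) − l ≤ (e + Π'l − l)⁺ + Θ'K = K ≤ κ`, so `V = 0` where `a = 0`.
-/

section Matrix

variable {m n R : Type*} [Fintype n]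

lemma mulVec_monotone [Semiring R] [PartialOrder R] [IsOrderedRing R] {A : Matrix m n R}
    (hA : ∀ i j, 0 ≤ A i j) : Monotone (A *ᵥ ·) :=
  fun _ _ huv i => dotProduct_le_dotProduct_of_nonneg_left huv (hA i)

lemma mulVec_nonneg_of_nonneg [Semiring R] [PartialOrder R] [IsOrderedRing R] {A : Matrix m n R}
    (hA : ∀ i j, 0 ≤ A i j) {v : n → R} (hv : 0 ≤ v) : 0 ≤ A *ᵥ v :=
  fun i => dotProduct_nonneg_of_nonneg (hA i) hv

lemma le_inv_mulVec_of_mulVec_le [DecidableEq n] [CommRing R] [PartialOrder R] [IsOrderedRing R]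
    {A : Matrix n n R} (hA : IsUnit A) (hA' : ∀ i j, 0 ≤ A⁻¹ i j) {v w : n → R}
    (h : A *ᵥ v ≤ w) : v ≤ A⁻¹ *ᵥ w := by
  have hdet : IsUnit A.det := (A.isUnit_iff_isUnit_det).1 hA
  calc v = A⁻¹ *ᵥ (A *ᵥ v) := by rw [mulVec_mulVec, nonsing_inv_mul _ hdet, one_mulVec]
    _ ≤ A⁻¹ *ᵥ w := mulVec_monotone hA' h

end Matrix

lemma strictMono_sum_add_mul {ι R : Type*} [Fintype ι] [Semiring R] [PartialOrder R]
    [IsStrictOrderedRing R] (c : ι → R) {w : ι → R} (hw : ∀ i, 0 < w i) :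
    StrictMono fun v : ι → R => ∑ i, (c i + w i * v i) := by
  intro u v huv
  obtain ⟨hle, j, hj⟩ := Pi.lt_def.1 huv
  refine Finset.sum_lt_sum (fun i _ => ?_) ⟨j, Finset.mem_univ j, ?_⟩
  · exact add_le_add_right (mul_le_mul_of_nonneg_left (hle i) (hw i).le) _
  · exact add_lt_add_right (mul_lt_mul_of_pos_left hj (hw j)) _

lemma minimal_of_forall_sum_le {ι R : Type*} [Fintype ι] [Semiring R] [PartialOrder R]
    [IsStrictOrderedRing R] {Q : (ι → R) → Prop} {c w v : ι → R} (hw : ∀ i, 0 < w i) (hv : Q v)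
    (hmin : ∀ u, Q u → ∑ i, (c i + w i * v i) ≤ ∑ i, (c i + w i * u i)) : Minimal Q v :=
  MinimalFor.minimal_of_strictMonoOn ((strictMono_sum_add_mul c hw).strictMonoOn _)
    ⟨hv, fun u hu _ => hmin u hu⟩

/-- The data of a clearing model with cross-holdings, in the paper's notation with `P` for `Π`:
endowments `e`, liabilities `l`, liability shares `P`, equity shares `Θ`, and the recovery rates
`α`, `β`, `γ` applied to the three kinds of assets in default. -/
structure ClearingData (ι R : Type*) where
  e : ι → R
  l : ι → R
  P : Matrix ι ι R
  Θ : Matrix ι ι R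
  α : R
  β : R
  γ : R

namespace ClearingData

variable {ι R : Type*} [Fintype ι] [CommRing R] [LinearOrder R] (S : ClearingData ι R)

/-- The value `x(p,V)` of the assets of the firms when they are not in default. -/
def assetValue (p V : ι → R) : ι → R :=
  S.e + S.Pᵀ *ᵥ p + S.Θᵀ *ᵥ V

/-- The value `y(p,V)` of the assets recovered in default. -/
def recoveryValue (p V : ι → R) : ι → R :=
  S.α • S.e + S.β • S.Pᵀ *ᵥ p + S.γ • S.Θᵀ *ᵥ V

/-- The positive part `(e + Π'l − l)⁺` of the net worth, disregarding equity holdings, when all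
liabilities are paid in full. -/
def fullPaymentSurplus : ι → R :=
  (S.e + S.Pᵀ *ᵥ S.l - S.l)⁺

/-- The vector `K` of the paper, an upper bound for the equities of an optimal solution. -/
noncomputable def equityBound [DecidableEq ι] : ι → R :=
  (1 - S.Θᵀ)⁻¹ *ᵥ S.fullPaymentSurplus

/-- Admissibility of `(a, p, V)` for problem P2, with arbitrary big-M constants `κ` and `κ₁`. -/
def IsAdmissible (κ κ₁ : R) (a p V : ι → R) : Prop :=
  (∀ i, a i = 0 ∨ a i = 1) ∧ p ∈ Set.Icc 0 S.l ∧ 0 ≤ V ∧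
    S.recoveryValue p V - κ₁ • a ≤ p ∧
    a * S.l ≤ p ∧
    S.recoveryValue p V ≤ (1 - a) * S.l + κ₁ • a ∧
    S.assetValue p V - S.l - κ • (1 - a) ≤ V

/-- The least equity vector allowed by the last constraint of P2 and `0 ≤ V`, when the asset values
are those of the equity vector `V`. -/
def leastEquity (κ : R) (a p V : ι → R) : ι → R :=
  (S.assetValue p V - S.l - κ • (1 - a))⁺

variable {S}

lemma IsAdmissible.leastEquity_le {κ κ₁ : R} {a p V : ι → R} (h : S.IsAdmissible κ κ₁ a p V) :
    S.leastEquity κ a p V ≤ V := by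
  obtain ⟨-, -, hV, -, -, -, hxV⟩ := h
  exact sup_le hxV hV

lemma equityBound_eq [DecidableEq ι] (hunit : IsUnit (1 - S.Θᵀ)) :
    S.equityBound = S.fullPaymentSurplus + S.Θᵀ *ᵥ S.equityBound := by
  have hdet : IsUnit (1 - S.Θᵀ).det := (isUnit_iff_isUnit_det _).1 hunit
  rw [← sub_eq_iff_eq_add]
  calc S.equityBound - S.Θᵀ *ᵥ S.equityBound = (1 - S.Θᵀ) *ᵥ S.equityBound := by
        rw [sub_mulVec, one_mulVec]
    _ = S.fullPaymentSurplus := by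
        rw [equityBound, mulVec_mulVec, mul_nonsing_inv _ hdet, one_mulVec]

variable [IsStrictOrderedRing R]

lemma assetValue_mono_right (hΘ : ∀ i j, 0 ≤ S.Θ i j) (p : ι → R) :
    Monotone (S.assetValue p) :=
  fun _ _ h => add_le_add_right (mulVec_monotone (fun i j => hΘ j i) h) _

lemma recoveryValue_mono_right (hΘ : ∀ i j, 0 ≤ S.Θ i j) (hγ : 0 ≤ S.γ) (p : ι → R) :
    Monotone (S.recoveryValue p) :=
  fun _ _ h => add_le_add_right
    (smul_le_smul_of_nonneg_left (mulVec_monotone (fun i j => hΘ j i) h) hγ) _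

lemma assetValue_sub_le (hP : ∀ i j, 0 ≤ S.P i j) {p : ι → R} (hp : p ≤ S.l) (V : ι → R) :
    S.assetValue p V - S.l ≤ S.fullPaymentSurplus + S.Θᵀ *ᵥ V :=
  calc S.assetValue p V - S.l = S.e + S.Pᵀ *ᵥ p - S.l + S.Θᵀ *ᵥ V := by
        rw [assetValue]; abel
    _ ≤ S.e + S.Pᵀ *ᵥ S.l - S.l + S.Θᵀ *ᵥ V := by
        gcongr
        exact mulVec_monotone (fun i j => hP j i) hp
    _ ≤ S.fullPaymentSurplus + S.Θᵀ *ᵥ V := by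
        gcongr
        exact le_posPart _

lemma IsAdmissible.leastEquity (hΘ : ∀ i j, 0 ≤ S.Θ i j) (hγ : 0 ≤ S.γ) {κ κ₁ : R}
    {a p V : ι → R} (h : S.IsAdmissible κ κ₁ a p V) :
    S.IsAdmissible κ κ₁ a p (S.leastEquity κ a p V) := by
  have hy := recoveryValue_mono_right hΘ hγ p h.leastEquity_le
  have hx := assetValue_mono_right hΘ p h.leastEquity_le
  obtain ⟨ha, hp, -, hyp, hal, hyl, -⟩ := h
  refine ⟨ha, hp, posPart_nonneg _, (sub_le_sub_right hy _).trans hyp, hal, hy.trans hyl, ?_⟩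
  exact (sub_le_sub_right (sub_le_sub_right hx _) _).trans (le_posPart _)

lemma leastEquity_eq_of_minimal (hΘ : ∀ i j, 0 ≤ S.Θ i j) (hγ : 0 ≤ S.γ) {κ κ₁ : R}
    {a p V : ι → R} (hV : Minimal (S.IsAdmissible κ κ₁ a p) V) : S.leastEquity κ a p V = V :=
  hV.eq_of_le (hV.prop.leastEquity hΘ hγ) hV.prop.leastEquity_le

lemma leastEquity_le_add_mulVec (hP : ∀ i j, 0 ≤ S.P i j) (hΘ : ∀ i j, 0 ≤ S.Θ i j) {κ : R}
    {a p V : ι → R} (hκ : 0 ≤ κ • (1 - a)) (hp : p ≤ S.l) (hV : 0 ≤ V) :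
    S.leastEquity κ a p V ≤ S.fullPaymentSurplus + S.Θᵀ *ᵥ V :=
  sup_le ((sub_le_self _ hκ).trans (assetValue_sub_le hP hp V))
    (add_nonneg (posPart_nonneg _) (mulVec_nonneg_of_nonneg (fun i j => hΘ j i) hV))

section EquityBound

variable [DecidableEq ι]

lemma equityBound_nonneg (hInv : ∀ i j, 0 ≤ (1 - S.Θᵀ)⁻¹ i j) : 0 ≤ S.equityBound :=
  mulVec_nonneg_of_nonneg hInv (posPart_nonneg _)

lemma le_equityBound (hunit : IsUnit (1 - S.Θᵀ)) (hInv : ∀ i j, 0 ≤ (1 - S.Θᵀ)⁻¹ i j)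
    {V : ι → R} (hV : V ≤ S.fullPaymentSurplus + S.Θᵀ *ᵥ V) : V ≤ S.equityBound := by
  refine le_inv_mulVec_of_mulVec_le hunit hInv ?_
  rwa [sub_mulVec, one_mulVec, sub_le_iff_le_add]

lemma assetValue_sub_le_equityBound (hP : ∀ i j, 0 ≤ S.P i j) (hΘ : ∀ i j, 0 ≤ S.Θ i j)
    (hunit : IsUnit (1 - S.Θᵀ)) {p V : ι → R} (hp : p ≤ S.l) (hV : V ≤ S.equityBound) :
    S.assetValue p V - S.l ≤ S.equityBound :=
  calc S.assetValue p V - S.l ≤ S.assetValue p S.equityBound - S.l :=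
        sub_le_sub_right (assetValue_mono_right hΘ p hV) _
    _ ≤ S.fullPaymentSurplus + S.Θᵀ *ᵥ S.equityBound := assetValue_sub_le hP hp _
    _ = S.equityBound := (equityBound_eq hunit).symm

lemma le_equityBound_of_minimal (hP : ∀ i j, 0 ≤ S.P i j) (hΘ : ∀ i j, 0 ≤ S.Θ i j)
    (hγ : 0 ≤ S.γ) (hunit : IsUnit (1 - S.Θᵀ)) (hInv : ∀ i j, 0 ≤ (1 - S.Θᵀ)⁻¹ i j)
    {κ κ₁ : R} (hκ : ∀ i, S.equityBound i ≤ κ) {a p V : ι → R}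
    (hV : Minimal (S.IsAdmissible κ κ₁ a p) V) : V ≤ S.equityBound := by
  obtain ⟨ha, hp, hV0, -⟩ := hV.prop
  have hκa : 0 ≤ κ • (1 - a) := fun i => by
    have hκ0 : 0 ≤ κ := (equityBound_nonneg hInv i).trans (hκ i)
    rcases ha i with h | h <;> simp [h, hκ0]
  refine le_equityBound hunit hInv ?_
  calc V = S.leastEquity κ a p V := (leastEquity_eq_of_minimal hΘ hγ hV).symm
    _ ≤ S.fullPaymentSurplus + S.Θᵀ *ᵥ V := leastEquity_le_add_mulVec hP hΘ hκa hp.2 hV0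

end EquityBound

end ClearingData

open ClearingData in
theorem stmt13_general {ι R : Type*} [Fintype ι] [DecidableEq ι] [CommRing R] [LinearOrder R]
    [IsStrictOrderedRing R] (S : ClearingData ι R) (hP : ∀ i j, 0 ≤ S.P i j)
    (hΘ : ∀ i j, 0 ≤ S.Θ i j) (hγ : 0 ≤ S.γ) (hunit : IsUnit (1 - S.Θᵀ))
    (hInv : ∀ i j, 0 ≤ (1 - S.Θᵀ)⁻¹ i j) {κ κ₁ : R} (hκ : ∀ i, S.equityBound i ≤ κ)
    {a p V : ι → R} (hV : Minimal (S.IsAdmissible κ κ₁ a p) V) :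
    V = a * (S.assetValue p V - S.l)⁺ := by
  obtain ⟨ha, hp, -⟩ := hV.prop
  have hVK : V ≤ S.equityBound := le_equityBound_of_minimal hP hΘ hγ hunit hInv hκ hV
  have hxκ : ∀ i, (S.assetValue p V - S.l) i ≤ κ := fun i =>
    (assetValue_sub_le_equityBound hP hΘ hunit hp.2 hVK i).trans (hκ i)
  calc V = S.leastEquity κ a p V := (leastEquity_eq_of_minimal hΘ hγ hV).symm
    _ = a * (S.assetValue p V - S.l)⁺ := funext fun i => by
      rcases ha i with h | h
      · simpa [leastEquity, h] using hxκ i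
      · simp [leastEquity, h]

/-- If `(ǎ,p̌,V̌)` is optimal for problem P2, then
`V̌ = ǎ ∘ (x(p̌,V̌) − l)⁺`. -/
theorem stmt13 (N : ℕ) (hN : 1 < N)
    (e l : Fin N → ℝ) (he : 0 ≤ e) (hl : 0 ≤ l)
    (P Th : Matrix (Fin N) (Fin N) ℝ)
    (hP : ∀ i j, 0 ≤ P i j) (hProw : ∀ i, ∑ j, P i j = 1)
    (hTh : ∀ i j, 0 ≤ Th i j) (hThrow : ∀ i, ∑ j, Th i j ≤ 1)
    (α β γ : ℝ) (hα : α ∈ Set.Icc (0:ℝ) 1) (hβ : β ∈ Set.Icc (0:ℝ) 1)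
    (hγ : γ ∈ Set.Icc (0:ℝ) 1)
    (hInv : IsUnit (1 - Th.transpose))
    (hInvNonneg : ∀ i j, 0 ≤ (1 - Th.transpose)⁻¹ i j)
    (K : Fin N → ℝ)
    (hK : K = (1 - Th.transpose)⁻¹.mulVec
      (fun i => max (e i + P.transpose.mulVec l i - l i) 0))
    (κ : ℝ) (hκ : κ = ⨆ i, K i)
    (κ₁ : ℝ) (hκ₁ : κ₁ = ⨆ i,
      (e i + P.transpose.mulVec l i + κ * Th.transpose.mulVec (fun _ => (1:ℝ)) i))
    (f₁ f₂ f₃ : Fin N → ℝ)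
    (hf₁ : ∀ i, 0 < f₁ i) (hf₂ : ∀ i, 0 < f₂ i) (hf₃ : ∀ i, 0 < f₃ i)
    (f : (Fin N → ℝ) → (Fin N → ℝ) → (Fin N → ℝ) → ℝ)
    (hf : f = fun a p V => ∑ i, (f₁ i * a i + f₂ i * p i + f₃ i * V i))
    (Adm2 : (Fin N → ℝ) → (Fin N → ℝ) → (Fin N → ℝ) → Prop)
    (hAdm2 : ∀ a p V : Fin N → ℝ, Adm2 a p V ↔
      ((∀ i, a i = 0 ∨ a i = 1) ∧ p ∈ Set.Icc (0 : Fin N → ℝ) l ∧ 0 ≤ V ∧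
      (∀ i, α * e i + β * P.transpose.mulVec p i + γ * Th.transpose.mulVec V i
        - κ₁ * a i ≤ p i) ∧
      (∀ i, a i * l i ≤ p i) ∧
      (∀ i, α * e i + β * P.transpose.mulVec p i + γ * Th.transpose.mulVec V i
        ≤ (1 - a i) * l i + κ₁ * a i) ∧
      (∀ i, e i + P.transpose.mulVec p i + Th.transpose.mulVec V i - l i
        - κ * (1 - a i) ≤ V i)))
    (acheck pcheck Vcheck : Fin N → ℝ)
    (hAdm : Adm2 acheck pcheck Vcheck)
    (hOpt : ∀ a p V : Fin N → ℝ, Adm2 a p V → f acheck pcheck Vcheck ≤ f a p V) :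
    Vcheck = fun j =>
      acheck j * max (e j + P.transpose.mulVec pcheck j
        + Th.transpose.mulVec Vcheck j - l j) 0 := by
  subst hK hκ hf
  exact stmt13_general ⟨e, l, P, Th, α, β, γ⟩ hP hTh hγ.1 hInv hInvNonneg
    (le_ciSup (Set.finite_range _).bddAbove) (minimal_of_forall_sum_le hf₃
      ((hAdm2 _ _ _).1 hAdm) fun V hV => hOpt acheck pcheck V ((hAdm2 _ _ V).2 hV))
end
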